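/- Volume comparison for intersections of disks on the round sphere (Lemma 3.1, k = 1 case): let n ≥ 2, let S be the unit sphere in EuclideanSpace ℝ (Fin (n+1)) equipped with its canonical (surface) measure μ, and let p ∈ S. Let R ∈ (0, π/2] and let C ⊆ {c ∈ S : ⟨p,c⟩ = cos R} be a subset of the metric sphere of radius R about p such that the directions from p to C form a π/2-net: for every unit vector v with ⟨v,p⟩ = 0 there exists c ∈ C with ⟨v,c⟩ ≥ 0. For c ∈ S and r ∈ (0, π], write D(c,r) = {x ∈ S : ⟨c,x⟩ ≥ cos r} for the closed geodesic disk of radius r about c. Then for every r ∈ (0, π] and every unit vector u with ⟨u,p⟩ = 0, setting c₁ = cos R·p + sin R·u and c₂ = cos R·p − sin R·u, one has μ( ⋂_{c ∈ C} D(c,r) ) ≤ μ( D(c₁,r) ∩ D(c₂,r) ). -/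

import Mathlib

open scoped RealInnerProductSpace

/-- `(n+1)`-dimensional Euclidean space. -/
noncomputable abbrev Esp (n : ℕ) := EuclideanSpace ℝ (Fin (n + 1))

/-- The unit sphere `Sⁿ ⊆ ℝ^{n+1}`. -/
noncomputable abbrev USphere (n : ℕ) := Metric.sphere (0 : Esp n) 1

/-- The canonical surface measure on the unit sphere. -/
noncomputable def sphereMeasure (n : ℕ) : MeasureTheory.Measure (USphere n) :=
  (MeasureTheory.volume : MeasureTheory.Measure (Esp n)).toSphere

/-- The closed geodesic disk of radius `r` about a unit vector `c`, as a subset of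
the unit sphere. -/
def geoDisk {n : ℕ} (c : Esp n) (r : ℝ) : Set (USphere n) :=
  {x : USphere n | Real.cos r ≤ ⟪c, (x : Esp n)⟫}

open MeasureTheory Set Metric

section General
variable {E : Type*} [NormedAddCommGroup E] [InnerProductSpace ℝ E] [FiniteDimensional ℝ E]
  [MeasurableSpace E] [BorelSpace E]

/-- Polar coordinates. -/
lemma mp_polar [Nontrivial E] :
    MeasurePreserving (fun z : sphere (0 : E) 1 × Ioi (0 : ℝ) => (z.2 : ℝ) • (z.1 : E))
      ((volume : Measure E).toSphere.prod (Measure.volumeIoiPow (Module.finrank ℝ E - 1)))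
      volume := by
  have h1 := (volume : Measure E).measurePreserving_homeomorphUnitSphereProd
  have h2 : MeasurePreserving (homeomorphUnitSphereProd E).toMeasurableEquiv.symm _ _ :=
    MeasurePreserving.symm (homeomorphUnitSphereProd E).toMeasurableEquiv h1
  have h3 : MeasurePreserving (Subtype.val : ({0}ᶜ : Set E) → E)
      ((volume : Measure E).comap Subtype.val) volume := by
    refine ⟨measurable_subtype_coe, ?_⟩
    rw [map_comap_subtype_coe (measurableSet_singleton _).compl]
    exact Measure.restrict_eq_self_of_ae_mem (by simp [ae_iff])
  have h4 := h3.comp h2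
  exact h4

/-- Splitting off a unit vector. -/
lemma mp_split (p : E) (hp : ‖p‖ = 1) :
    MeasurePreserving (fun z : ℝ × (Submodule.span ℝ {p})ᗮ => z.1 • p + (z.2 : E))
      ((volume : Measure ℝ).prod volume) volume := by
  have h1 := (LinearIsometryEquiv.toSpanUnitSingleton (𝕜 := ℝ) p hp).measurePreserving
  have h2 := h1.prod (MeasurePreserving.id (volume : Measure (Submodule.span ℝ {p})ᗮ))
  have h3 := WithLp.volume_preserving_toLp (Submodule.span ℝ {p}) (Submodule.span ℝ {p})ᗮ
  have h4 := (Submodule.span ℝ {p}).orthogonalDecomposition.symm.measurePreserving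
  have h5 := (h4.comp h3).comp h2
  have : (fun z : ℝ × (Submodule.span ℝ {p})ᗮ => z.1 • p + (z.2 : E)) =
    ((Submodule.span ℝ {p}).orthogonalDecomposition.symm ∘ WithLp.toLp 2) ∘
      Prod.map (LinearIsometryEquiv.toSpanUnitSingleton (𝕜 := ℝ) p hp) id := by
    ext z
    simp [Submodule.orthogonalDecomposition_symm_apply]
  rw [this]
  exact h5

lemma mp_cyl (p : E) (hp : ‖p‖ = 1) [Nontrivial (Submodule.span ℝ {p})ᗮ] :
    MeasurePreserving (fun z : ℝ × (sphere (0 : (Submodule.span ℝ {p})ᗮ) 1 × Ioi (0 : ℝ)) =>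
        z.1 • p + (z.2.2 : ℝ) • ((z.2.1 : (Submodule.span ℝ {p})ᗮ) : E))
      ((volume : Measure ℝ).prod ((volume : Measure (Submodule.span ℝ {p})ᗮ).toSphere.prod
        (Measure.volumeIoiPow (Module.finrank ℝ (Submodule.span ℝ {p})ᗮ - 1)))) volume := 
  (mp_split p hp).comp ((MeasurePreserving.id _).prod mp_polar)

/-- cone measure -/
lemma toSphere_cone (A : Set E) (hA : MeasurableSet A) (hc : ∀ t : ℝ, 0 < t → ∀ y ∈ A, t • y ∈ A) :
    (volume : Measure E).toSphere {w : sphere (0:E) 1 | (w : E) ∈ A} =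
      Module.finrank ℝ E * volume (A ∩ {y | y ≠ 0 ∧ ‖y‖ < 1}) := by
  rw [Measure.toSphere_apply' (volume : Measure E)
    (s := {w : sphere (0:E) 1 | (w : E) ∈ A}) (measurable_subtype_coe hA)]
  congr 2
  ext y
  simp only [mem_smul, mem_image, mem_inter_iff, mem_ofPred_eq]
  constructor
  · rintro ⟨t, ht, _, ⟨w, hw, rfl⟩, rfl⟩
    have hn : ‖(w : E)‖ = 1 := by simp
    refine ⟨hc t ht.1 _ hw, ?_, ?_⟩
    · have : (w : E) ≠ 0 := by intro h; simp [h] at hn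
      exact smul_ne_zero ht.1.ne' this
    · rw [norm_smul, hn, mul_one, Real.norm_of_nonneg ht.1.le]; exact ht.2
  · rintro ⟨hy, h0, h1⟩
    have hn : 0 < ‖y‖ := norm_pos_iff.2 h0
    refine ⟨‖y‖, ⟨hn, h1⟩, ‖y‖⁻¹ • y, ⟨⟨‖y‖⁻¹ • y, ?_⟩, hc _ (inv_pos.2 hn) _ hy, rfl⟩, ?_⟩
    · simp [norm_smul, hn.ne']
    · rw [smul_smul, mul_inv_cancel₀ hn.ne', one_smul]

lemma toSphere_isometry (f : E ≃ₗᵢ[ℝ] E) (A : Set E) (hA : MeasurableSet A)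
    (hc : ∀ t : ℝ, 0 < t → ∀ y ∈ A, t • y ∈ A) :
    (volume : Measure E).toSphere {w : sphere (0:E) 1 | f (w : E) ∈ A} =
      (volume : Measure E).toSphere {w : sphere (0:E) 1 | (w : E) ∈ A} := by
  have hf := f.measurePreserving
  have e1 := toSphere_cone (f ⁻¹' A) (hf.measurable hA) (by
    intro t ht y hy; simp only [mem_preimage, map_smul]; exact hc t ht _ hy)
  have e2 := toSphere_cone A hA hc
  have : {w : sphere (0:E) 1 | f (w : E) ∈ A} = {w : sphere (0:E) 1 | (w : E) ∈ f ⁻¹' A} := rfl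
  rw [this, e1, e2, ← hf.measure_preimage
    (s := A ∩ {y | y ≠ 0 ∧ ‖y‖ < 1}) ?_]
  · congr 2
    ext y; simp
  · refine (hA.inter ?_).nullMeasurableSet
    exact (measurableSet_singleton (0:E)).compl.inter (measurableSet_lt measurable_norm measurable_const)

lemma equator_null (q : E) (hq : ‖q‖ = 1) :
    (volume : Measure E).toSphere {w : sphere (0:E) 1 | ⟪q, (w : E)⟫ = 0} = 0 := by
  have := toSphere_cone {y : E | ⟪q, y⟫ = 0} (measurableSet_eq_fun (by fun_prop) (by fun_prop))
    (by intro t ht y hy; simp only [mem_ofPred_eq] at *; rw [inner_smul_right, hy, mul_zero])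
  simp only [mem_ofPred_eq] at this
  rw [this]
  have h0 : volume {y : E | ⟪q, y⟫ = 0} = 0 := by
    have := Measure.addHaar_submodule (volume : Measure E) (Submodule.span ℝ {q})ᗮ (by
      intro h
      have : q ∈ (Submodule.span ℝ {q})ᗮ := by rw [h]; trivial
      rw [Submodule.mem_orthogonal_singleton_iff_inner_right] at this
      rw [real_inner_self_eq_norm_sq, hq] at this; norm_num at this)
    convert this using 2
    ext y; simp [Submodule.mem_orthogonal_singleton_iff_inner_right]
  rw [measure_mono_null inter_subset_left h0, mul_zero]

lemma vol_slice_dir (p : E) (hp : ‖p‖ = 1) [Nontrivial (Submodule.span ℝ {p})ᗮ]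
    (A : Set E) (hA : MeasurableSet A) :
    volume A = ∫⁻ w : sphere (0 : (Submodule.span ℝ {p})ᗮ) 1,
      ((volume : Measure ℝ).prod
        (Measure.volumeIoiPow (Module.finrank ℝ (Submodule.span ℝ {p})ᗮ - 1)))
        {z | z.1 • p + (z.2 : ℝ) • ((w : (Submodule.span ℝ {p})ᗮ) : E) ∈ A}
      ∂(volume : Measure (Submodule.span ℝ {p})ᗮ).toSphere := by
  have h := mp_cyl p hp
  have hm := h.measurable hA
  rw [← h.measure_preimage hA.nullMeasurableSet, Measure.prod_apply hm]
  have h1 : ∀ x : ℝ, MeasurableSet (Prod.mk x ⁻¹' ((fun z : ℝ × (sphere (0 : (Submodule.span ℝ {p})ᗮ) 1 × Ioi (0 : ℝ)) =>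
        z.1 • p + (z.2.2 : ℝ) • ((z.2.1 : (Submodule.span ℝ {p})ᗮ) : E)) ⁻¹' A)) :=
    fun x => measurable_prodMk_left hm
  rw [lintegral_congr fun x => Measure.prod_apply (h1 x), lintegral_lintegral_swap]
  · refine lintegral_congr fun w => ?_
    rw [Measure.prod_apply]
    · rfl
    · exact (show Measurable (fun z : ℝ × Ioi (0:ℝ) => z.1 • p + (z.2 : ℝ) • ((w : (Submodule.span ℝ {p})ᗮ) : E)) by fun_prop) hA
  · apply Measurable.aemeasurable
    have hm' : MeasurableSet ((fun z : (ℝ × sphere (0 : (Submodule.span ℝ {p})ᗮ) 1) × Ioi (0 : ℝ) =>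
        z.1.1 • p + (z.2 : ℝ) • ((z.1.2 : (Submodule.span ℝ {p})ᗮ) : E)) ⁻¹' A) :=
      (show Measurable _ by fun_prop) hA
    exact measurable_measure_prodMk_left hm'

lemma vol_le_of_slices (p : E) (hp : ‖p‖ = 1) [Nontrivial (Submodule.span ℝ {p})ᗮ]
    (A A' : Set E) (hA : MeasurableSet A) (hA' : MeasurableSet A')
    (hle : ∀ a s : ℝ, 0 < s → (volume : Measure (Submodule.span ℝ {p})ᗮ).toSphere
        {w | a • p + s • ((w : (Submodule.span ℝ {p})ᗮ) : E) ∈ A} ≤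
        (volume : Measure (Submodule.span ℝ {p})ᗮ).toSphere
        {w | a • p + s • ((w : (Submodule.span ℝ {p})ᗮ) : E) ∈ A'}) :
    volume A ≤ volume A' := by
  have h := mp_cyl p hp
  have hm := h.measurable hA
  have hm' := h.measurable hA'
  rw [← h.measure_preimage hA.nullMeasurableSet, ← h.measure_preimage hA'.nullMeasurableSet,
    Measure.prod_apply hm, Measure.prod_apply hm']
  refine lintegral_mono fun a => ?_
  rw [Measure.prod_apply_symm (measurable_prodMk_left hm),
    Measure.prod_apply_symm (measurable_prodMk_left hm')]
  exact lintegral_mono fun s => hle a s s.2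

lemma inner_slice (p : E) (hp : ‖p‖ = 1) (a s : ℝ) (w : sphere (0 : (Submodule.span ℝ {p})ᗮ) 1) :
    ⟪p, a • p + s • ((w : (Submodule.span ℝ {p})ᗮ) : E)⟫ = a := by
  have h := (Submodule.mem_orthogonal_singleton_iff_inner_right (𝕜 := ℝ)).1
    (w : (Submodule.span ℝ {p})ᗮ).2
  rw [inner_add_right, inner_smul_right, inner_smul_right, h, real_inner_self_eq_norm_sq, hp]
  ring

lemma norm_slice (p : E) (hp : ‖p‖ = 1) (a s : ℝ) (w : sphere (0 : (Submodule.span ℝ {p})ᗮ) 1) :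
    ‖a • p + s • ((w : (Submodule.span ℝ {p})ᗮ) : E)‖ = √(a ^ 2 + s ^ 2) := by
  have h := (Submodule.mem_orthogonal_singleton_iff_inner_right (𝕜 := ℝ)).1
    (w : (Submodule.span ℝ {p})ᗮ).2
  have hw : ‖((w : (Submodule.span ℝ {p})ᗮ) : E)‖ = 1 := by
    have := norm_eq_of_mem_sphere w
    exact this
  symm
  rw [Real.sqrt_eq_iff_eq_sq (by positivity) (norm_nonneg _), norm_add_sq_real, norm_smul,
    norm_smul, hw, hp, inner_smul_left, inner_smul_right, h]
  simp

lemma angle_compare {l a s a' s' : ℝ} (hs : 0 < s) (hs' : 0 < s') (ha : 0 ≤ a) (ha' : 0 ≤ a')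
    (h : a ≤ l * √(a ^ 2 + s ^ 2)) (h' : l * √(a' ^ 2 + s' ^ 2) < a') :
    a * s' ≤ a' * s := by
  have p1 : 0 < √(a ^ 2 + s ^ 2) := by positivity
  have p2 : 0 < √(a' ^ 2 + s' ^ 2) := by positivity
  have q1 : √(a ^ 2 + s ^ 2) ^ 2 = a ^ 2 + s ^ 2 := Real.sq_sqrt (by positivity)
  have q2 : √(a' ^ 2 + s' ^ 2) ^ 2 = a' ^ 2 + s' ^ 2 := Real.sq_sqrt (by positivity)
  have hl : 0 ≤ l := by
    by_contra hl
    push Not at hl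
    nlinarith [mul_neg_of_neg_of_pos hl p1]
  have e1 : a ^ 2 ≤ l ^ 2 * (a ^ 2 + s ^ 2) := by
    rw [← q1, ← mul_pow]; exact pow_le_pow_left₀ ha h 2
  have e2 : l ^ 2 * (a' ^ 2 + s' ^ 2) < a' ^ 2 := by
    rw [← q2, ← mul_pow]; exact pow_lt_pow_left₀ h' (by positivity) (by norm_num)
  have f1 : a ^ 2 * (1 - l ^ 2) ≤ l ^ 2 * s ^ 2 := by linarith
  have f2 : l ^ 2 * s' ^ 2 < a' ^ 2 * (1 - l ^ 2) := by linarith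
  have g : 0 < 1 - l ^ 2 := by
    by_contra g
    push Not at g
    nlinarith [mul_nonneg (sq_nonneg l) (sq_nonneg s'), mul_nonneg (sq_nonneg a') (neg_nonneg.2 g)]
  have k : (a * s') ^ 2 * (1 - l ^ 2) ≤ (a' * s) ^ 2 * (1 - l ^ 2) := by
    nlinarith [mul_le_mul_of_nonneg_right f1 (sq_nonneg s'), mul_le_mul_of_nonneg_right f2.le (sq_nonneg s)]
  have k2 := le_of_mul_le_mul_right k g
  exact le_of_sq_le_sq k2 (by positivity)

lemma corr_vol (q : E) (hq : ‖q‖ = 1) [Nontrivial (Submodule.span ℝ {q})ᗮ]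
    (V : Set E) (hV : MeasurableSet V) (hc : ∀ t : ℝ, 0 < t → ∀ y ∈ V, t • y ∈ V)
    (ht : ∀ t : ℝ, 0 ≤ t → ∀ y ∈ V, y + t • q ∈ V) (hVH : ∀ y ∈ V, 0 ≤ ⟪q, y⟫) (l : ℝ) :
    volume (V ∩ {y | y ≠ 0 ∧ ‖y‖ < 1}) *
      volume ({y : E | l * ‖y‖ < ⟪q, y⟫ ∧ 0 ≤ ⟪q, y⟫} ∩ {y | y ≠ 0 ∧ ‖y‖ < 1}) ≤
    volume ((V ∩ {y : E | l * ‖y‖ < ⟪q, y⟫}) ∩ {y | y ≠ 0 ∧ ‖y‖ < 1}) *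
      volume ({y : E | 0 ≤ ⟪q, y⟫} ∩ {y | y ≠ 0 ∧ ‖y‖ < 1}) := by
  have mBl : MeasurableSet {y : E | y ≠ 0 ∧ ‖y‖ < 1} :=
    (measurableSet_singleton (0:E)).compl.inter (measurableSet_lt measurable_norm measurable_const)
  have mB : MeasurableSet {y : E | l * ‖y‖ < ⟪q, y⟫} :=
    measurableSet_lt (by fun_prop) (by fun_prop)
  have mH : MeasurableSet {y : E | 0 ≤ ⟪q, y⟫} := measurableSet_le (by fun_prop) (by fun_prop)
  have mBH : MeasurableSet {y : E | l * ‖y‖ < ⟪q, y⟫ ∧ 0 ≤ ⟪q, y⟫} := mB.inter mH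
  have nz : ∀ (a s : ℝ) (w : sphere (0 : (Submodule.span ℝ {q})ᗮ) 1), 0 < s →
      a • q + s • ((w : (Submodule.span ℝ {q})ᗮ) : E) ≠ 0 := by
    intro a s w hs h0
    have := norm_slice q hq a s w
    rw [h0, norm_zero] at this
    have : 0 < √(a ^ 2 + s ^ 2) := by positivity
    linarith
  rw [vol_slice_dir q hq _ (hV.inter mBl), vol_slice_dir q hq _ (mBH.inter mBl),
    vol_slice_dir q hq _ ((hV.inter mB).inter mBl), vol_slice_dir q hq _ (mH.inter mBl)]
  simp only [mem_inter_iff, mem_ofPred_eq, inner_slice q hq, norm_slice q hq]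
  set η := ((volume : Measure ℝ).prod
        (Measure.volumeIoiPow (Module.finrank ℝ (Submodule.span ℝ {q})ᗮ - 1))) with hη
  have nz' : ∀ (z : ℝ × Ioi (0:ℝ)) (w : sphere (0 : (Submodule.span ℝ {q})ᗮ) 1),
      (z.1 • q + (z.2:ℝ) • ((w : (Submodule.span ℝ {q})ᗮ) : E) ≠ 0) = True := by
    intro z w
    simpa using nz z.1 z.2 w z.2.2
  simp only [nz', true_and]
  rw [lintegral_const, lintegral_const, ← mul_assoc, ← mul_assoc]
  refine mul_le_mul_left ?_ _
  refine (lintegral_mul_const_le _ _).trans ((lintegral_mono ?_).trans_eq (lintegral_mul_const _ ?_))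
  · intro w
    dsimp only
    by_cases hsub : ∀ z : ℝ × Ioi (0:ℝ), z.1 • q + (z.2:ℝ) • ((w : (Submodule.span ℝ {q})ᗮ) : E) ∈ V →
        l * √(z.1 ^ 2 + (z.2:ℝ) ^ 2) < z.1
    · refine mul_le_mul' (measure_mono ?_) (measure_mono ?_)
      · rintro z ⟨h1, h2⟩
        exact ⟨⟨h1, hsub z h1⟩, h2⟩
      · rintro z ⟨⟨h1, h2⟩, h3⟩
        exact ⟨h2, h3⟩
    · push Not at hsub
      obtain ⟨z, hz, hzl⟩ := hsub
      rw [mul_comm]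
      have hz0 : 0 ≤ z.1 := by
        have := hVH _ hz
        rwa [inner_slice q hq] at this
      refine mul_le_mul' (measure_mono ?_) (measure_mono ?_)
      · rintro z' ⟨⟨h1, h2⟩, h3⟩
        refine ⟨⟨?_, h1⟩, h3⟩
        have hs : 0 < (z.2 : ℝ) := z.2.2
        have hs' : 0 < (z'.2 : ℝ) := z'.2.2
        have key := angle_compare hs hs' hz0 h2 hzl h1
        have k1 := hc ((z'.2 : ℝ) / z.2) (by positivity) _ hz
        have k2 := ht (z'.1 - z.1 * z'.2 / z.2) (by
          rw [sub_nonneg, div_le_iff₀ hs]; exact key) _ k1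
        show _ ∈ V
        convert k2 using 1
        rw [smul_add, smul_smul, smul_smul, div_mul_cancel₀ _ hs.ne', sub_smul]
        have : (z'.2 : ℝ) / z.2 * z.1 = z.1 * z'.2 / z.2 := by ring
        rw [this]
        abel
      · rintro z' ⟨h1, h2⟩
        refine ⟨?_, h2⟩
        have := hVH _ h1
        rwa [inner_slice q hq] at this
  · have hm' : MeasurableSet ((fun z : sphere (0 : (Submodule.span ℝ {q})ᗮ) 1 × (ℝ × Ioi (0 : ℝ)) =>
        z.2.1 • q + (z.2.2 : ℝ) • ((z.1 : (Submodule.span ℝ {q})ᗮ) : E)) ⁻¹'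
          ((V ∩ {y : E | l * ‖y‖ < ⟪q, y⟫}) ∩ {y | y ≠ 0 ∧ ‖y‖ < 1})) :=
      (show Measurable _ by fun_prop) ((hV.inter mB).inter mBl)
    have := measurable_measure_prodMk_left (ν := η) hm'
    convert this using 3 with w
    ext z
    simp only [mem_preimage, mem_inter_iff, mem_ofPred_eq, inner_slice q hq, norm_slice q hq, nz',
      true_and]

lemma corr_sphere (q : E) (hq : ‖q‖ = 1) [Nontrivial (Submodule.span ℝ {q})ᗮ]
    (V : Set E) (hV : MeasurableSet V) (hc : ∀ t : ℝ, 0 < t → ∀ y ∈ V, t • y ∈ V)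
    (ht : ∀ t : ℝ, 0 ≤ t → ∀ y ∈ V, y + t • q ∈ V) (hVH : ∀ y ∈ V, 0 ≤ ⟪q, y⟫) (l : ℝ) :
    (volume : Measure E).toSphere {w : sphere (0:E) 1 | (w : E) ∈ V} *
      (volume : Measure E).toSphere {w : sphere (0:E) 1 | l < ⟪q, (w : E)⟫ ∧ 0 ≤ ⟪q, (w : E)⟫} ≤
    (volume : Measure E).toSphere {w : sphere (0:E) 1 | (w : E) ∈ V ∧ l < ⟪q, (w : E)⟫} *
      (volume : Measure E).toSphere {w : sphere (0:E) 1 | 0 ≤ ⟪q, (w : E)⟫} := by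
  have mB : MeasurableSet {y : E | l * ‖y‖ < ⟪q, y⟫} :=
    measurableSet_lt (by fun_prop) (by fun_prop)
  have mH : MeasurableSet {y : E | 0 ≤ ⟪q, y⟫} := measurableSet_le (by fun_prop) (by fun_prop)
  have cB : ∀ t : ℝ, 0 < t → ∀ y ∈ {y : E | l * ‖y‖ < ⟪q, y⟫}, t • y ∈ {y : E | l * ‖y‖ < ⟪q, y⟫} := by
    intro t ht y hy
    simp only [mem_ofPred_eq] at *
    rw [inner_smul_right, norm_smul, Real.norm_of_nonneg ht.le]
    nlinarith
  have cH : ∀ t : ℝ, 0 < t → ∀ y ∈ {y : E | 0 ≤ ⟪q, y⟫}, t • y ∈ {y : E | 0 ≤ ⟪q, y⟫} := by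
    intro t ht y hy
    simp only [mem_ofPred_eq] at *
    rw [inner_smul_right]
    positivity
  have e1 := toSphere_cone V hV hc
  have e2 := toSphere_cone ({y : E | l * ‖y‖ < ⟪q, y⟫} ∩ {y : E | 0 ≤ ⟪q, y⟫}) (mB.inter mH)
    (fun t ht y hy => ⟨cB t ht y hy.1, cH t ht y hy.2⟩)
  have e3 := toSphere_cone (V ∩ {y : E | l * ‖y‖ < ⟪q, y⟫}) (hV.inter mB)
    (fun t ht y hy => ⟨hc t ht y hy.1, cB t ht y hy.2⟩)
  have e4 := toSphere_cone _ mH cH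
  simp only [mem_inter_iff, mem_ofPred_eq, norm_eq_of_mem_sphere, mul_one] at e1 e2 e3 e4
  rw [e1, e2, e3, e4]
  have := corr_vol q hq V hV hc ht hVH l
  have h2 := mul_le_mul_right this ((Module.finrank ℝ E : ENNReal) * Module.finrank ℝ E)
  rw [mul_mul_mul_comm, mul_mul_mul_comm (Module.finrank ℝ E : ENNReal) (volume (_ ∩ _ ∩ _))]
  exact h2

lemma half_indep (q u : E) (hq : ‖q‖ = 1) (hu : ‖u‖ = 1) (P : ℝ → Prop)
    (hP : MeasurableSet {y : E | P (⟪u, y⟫ / ‖y‖)}) :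
    (volume : Measure E).toSphere {w : sphere (0:E) 1 | P ⟪q, (w : E)⟫} =
    (volume : Measure E).toSphere {w : sphere (0:E) 1 | P ⟪u, (w : E)⟫} := by
  have hf := Submodule.reflection_sub (v := q) (w := u) (hq.trans hu.symm)
  set f := Submodule.reflection (Submodule.span ℝ {q - u})ᗮ
  have h := toSphere_isometry f _ hP (by
    intro t ht y hy
    simp only [mem_ofPred_eq] at *
    rw [inner_smul_right, norm_smul, Real.norm_of_nonneg ht.le, mul_div_mul_left _ _ ht.ne']
    exact hy)
  simp only [mem_ofPred_eq, norm_eq_of_mem_sphere, div_one, LinearIsometryEquiv.norm_map] at h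
  rw [← h, ← hf]
  simp only [LinearIsometryEquiv.inner_map_map]

lemma caps_ineq {N : ℕ} (hfin : ∀ q : E, Nontrivial (Submodule.span ℝ {q})ᗮ) (q : Fin N → E)
    (hq : ∀ i, ‖q i‖ = 1) (hnet : ∀ y, ∃ i, 0 ≤ ⟪q i, y⟫) (u : E) (hu : ‖u‖ = 1) (l : ℝ) :
    (volume : Measure E).toSphere {w : sphere (0:E) 1 | ∀ i, ⟪q i, (w : E)⟫ ≤ l} ≤
    (volume : Measure E).toSphere {w : sphere (0:E) 1 | ⟪u, (w : E)⟫ ≤ l ∧ -⟪u, (w : E)⟫ ≤ l} := by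
  set σ := (volume : Measure E).toSphere with hσ
  set b := σ {w : sphere (0:E) 1 | l < ⟪u, (w : E)⟫ ∧ 0 ≤ ⟪u, (w : E)⟫} with hb
  set hh := σ {w : sphere (0:E) 1 | 0 ≤ ⟪u, (w : E)⟫} with hhh
  have hb' : ∀ v : E, ‖v‖ = 1 → σ {w : sphere (0:E) 1 | l < ⟪v, (w : E)⟫ ∧ 0 ≤ ⟪v, (w : E)⟫} = b :=
    fun v hv => half_indep v u hv hu (fun x => l < x ∧ 0 ≤ x)
      (MeasurableSet.inter (s₁ := {y : E | l < ⟪u, y⟫ / ‖y‖}) (s₂ := {y : E | 0 ≤ ⟪u, y⟫ / ‖y‖})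
        (measurableSet_lt (by fun_prop) (by fun_prop))
        (measurableSet_le (by fun_prop) (by fun_prop)))
  have hh' : ∀ v : E, ‖v‖ = 1 → σ {w : sphere (0:E) 1 | 0 ≤ ⟪v, (w : E)⟫} = hh :=
    fun v hv => half_indep v u hv hu (fun x => 0 ≤ x) (measurableSet_le (by fun_prop) (by fun_prop))
  -- the Voronoi cells
  let V : Fin N → Set E := fun i =>
    {y | ∀ j, ⟪q j, y⟫ ≤ ⟪q i, y⟫ ∧ (j < i → ⟪q j, y⟫ < ⟪q i, y⟫)}
  have mV : ∀ i, MeasurableSet (V i) := by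
    intro i
    have : V i = ⋂ j, ({y | ⟪q j, y⟫ ≤ ⟪q i, y⟫} ∩ ⋂ (_ : j < i), {y | ⟪q j, y⟫ < ⟪q i, y⟫}) := by
      ext y; simp [V]
    rw [this]
    refine MeasurableSet.iInter fun j => (measurableSet_le (by fun_prop) (by fun_prop)).inter
      (MeasurableSet.iInter fun _ => measurableSet_lt (by fun_prop) (by fun_prop))
  have hVH : ∀ i, ∀ y ∈ V i, 0 ≤ ⟪q i, y⟫ := by
    intro i y hy
    obtain ⟨j, hj⟩ := hnet y
    exact hj.trans (hy j).1
  have cover : ∀ y, ∃ i, y ∈ V i := by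
    intro y
    obtain ⟨i0, -⟩ := hnet y
    obtain ⟨i1, -, h1⟩ := Finset.exists_max_image Finset.univ (fun i => ⟪q i, y⟫) ⟨i0, by simp⟩
    obtain ⟨i, hi, h2⟩ := Finset.exists_min_image
      (Finset.univ.filter fun i => ⟪q i, y⟫ = ⟪q i1, y⟫) id ⟨i1, by simp⟩
    simp only [Finset.mem_filter, Finset.mem_univ, true_and, id, true_implies] at hi h1 h2
    refine ⟨i, fun j => ⟨by rw [hi]; exact h1 j, fun hj => ?_⟩⟩
    rw [hi]
    exact lt_of_le_of_ne (h1 j) fun h => absurd (h2 j h) (not_le.2 hj)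
  have disj : ∀ i j y, y ∈ V i → y ∈ V j → i = j := by
    intro i j y hi hj
    rcases lt_trichotomy i j with h | h | h
    · exact absurd ((hj i).2 h) (not_lt.2 (hi j).1)
    · exact h
    · exact absurd ((hi j).2 h) (not_lt.2 (hj i).1)
  have step : ∀ i, σ {w : sphere (0:E) 1 | (w : E) ∈ V i} * b ≤
      σ {w : sphere (0:E) 1 | (w : E) ∈ V i ∧ l < ⟪q i, (w : E)⟫} * hh := by
    intro i
    have := hfin (q i)
    have := corr_sphere (q i) (hq i) (V i) (mV i) ?_ ?_ (hVH i) l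
    · rwa [hb' _ (hq i), hh' _ (hq i)] at this
    · intro t ht y hy j
      obtain ⟨h1, h2⟩ := hy j
      rw [inner_smul_right, inner_smul_right]
      exact ⟨mul_le_mul_of_nonneg_left h1 ht.le, fun h => mul_lt_mul_of_pos_left (h2 h) ht⟩
    · intro t ht y hy j
      obtain ⟨h1, h2⟩ := hy j
      rw [inner_add_right, inner_add_right, inner_smul_right, inner_smul_right,
        real_inner_self_eq_norm_sq, hq]
      have : ⟪q j, q i⟫ ≤ 1 := by
        have := real_inner_le_norm (q j) (q i)
        rwa [hq, hq, mul_one] at this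
      have h3 : t * ⟪q j, q i⟫ ≤ t * 1 ^ 2 := by nlinarith
      exact ⟨by linarith, fun h => by linarith [h2 h]⟩
  have m1 : ∀ i, MeasurableSet {w : sphere (0:E) 1 | (w : E) ∈ V i} :=
    fun i => measurable_subtype_coe (mV i)
  have m2 : ∀ i, MeasurableSet {w : sphere (0:E) 1 | l < ⟪q i, (w : E)⟫} :=
    fun i => measurableSet_lt (by fun_prop) (by fun_prop)
  have main1 : σ univ * b ≤ σ {w : sphere (0:E) 1 | ∃ i, l < ⟪q i, (w : E)⟫} * hh := by
    calc σ univ * b ≤ (∑ i, σ {w : sphere (0:E) 1 | (w : E) ∈ V i}) * b := by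
          refine mul_le_mul_left ?_ _
          refine (measure_mono ?_).trans (measure_iUnion_fintype_le σ _)
          intro w _
          exact mem_iUnion.2 (cover w)
      _ ≤ (∑ i, σ {w : sphere (0:E) 1 | (w : E) ∈ V i ∧ l < ⟪q i, (w : E)⟫}) * hh := by
          rw [Finset.sum_mul, Finset.sum_mul]
          exact Finset.sum_le_sum fun i _ => step i
      _ ≤ _ := by
          refine mul_le_mul_left ?_ _
          rw [← tsum_fintype (L := .unconditional _), ← measure_iUnion]
          · refine measure_mono ?_
            intro w hw
            obtain ⟨i, hi⟩ := mem_iUnion.1 hw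
            exact ⟨i, hi.2⟩
          · intro i j hij
            refine Set.disjoint_left.2 fun w hi hj => hij (disj i j w hi.1 hj.1)
          · exact fun i => (m1 i).inter (m2 i)
  have huniv : σ univ ≤ hh + hh := by
    calc σ univ ≤ σ ({w : sphere (0:E) 1 | 0 ≤ ⟪u, (w : E)⟫} ∪
          {w : sphere (0:E) 1 | 0 ≤ ⟪-u, (w : E)⟫}) := by
          refine measure_mono fun w _ => ?_
          simp only [mem_union, mem_ofPred_eq, inner_neg_left, neg_nonneg]
          exact le_total _ _
      _ ≤ _ := (measure_union_le _ _).trans_eq (by rw [hh' (-u) (by simpa using hu)])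
  have huniv2 : hh + hh ≤ σ univ := by
    have h1 : hh ≤ σ {w : sphere (0:E) 1 | 0 < ⟪u, (w : E)⟫} := by
      calc hh ≤ σ ({w : sphere (0:E) 1 | 0 < ⟪u, (w : E)⟫} ∪
            {w : sphere (0:E) 1 | ⟪u, (w : E)⟫ = 0}) := by
            refine measure_mono fun w hw => ?_
            rcases lt_or_eq_of_le (show 0 ≤ ⟪u, (w : E)⟫ from hw) with h | h
            · exact Or.inl h
            · exact Or.inr h.symm
        _ ≤ _ := (measure_union_le _ _).trans_eq (by rw [equator_null u hu, add_zero])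
    calc hh + hh ≤ σ {w : sphere (0:E) 1 | 0 < ⟪u, (w : E)⟫} +
          σ {w : sphere (0:E) 1 | 0 ≤ ⟪-u, (w : E)⟫} := by
            rw [hh' (-u) (by simpa using hu)]; gcongr
      _ = σ ({w : sphere (0:E) 1 | 0 < ⟪u, (w : E)⟫} ∪
          {w : sphere (0:E) 1 | 0 ≤ ⟪-u, (w : E)⟫}) := by
            rw [measure_union]
            · refine Set.disjoint_left.2 fun w h1 h2 => ?_
              simp only [mem_ofPred_eq, inner_neg_left, neg_nonneg] at h1 h2
              linarith
            · exact measurableSet_le (by fun_prop) (by fun_prop)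
      _ ≤ σ univ := measure_mono (subset_univ _)
  have main2 : σ {w : sphere (0:E) 1 | l < ⟪u, (w : E)⟫ ∨ l < -⟪u, (w : E)⟫} * hh ≤ σ univ * b := by
    rcases lt_or_ge l 0 with hl | hl
    · have : b = hh := by
        rw [hb, hhh]; congr 1; ext w
        simp only [mem_ofPred_eq]
        exact ⟨fun h => h.2, fun h => ⟨by linarith, h⟩⟩
      rw [this]
      exact mul_le_mul_left (measure_mono (subset_univ _)) _
    · have : σ {w : sphere (0:E) 1 | l < ⟪u, (w : E)⟫ ∨ l < -⟪u, (w : E)⟫} ≤ b + b := by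
        calc _ ≤ σ ({w : sphere (0:E) 1 | l < ⟪u, (w : E)⟫ ∧ 0 ≤ ⟪u, (w : E)⟫} ∪
              {w : sphere (0:E) 1 | l < ⟪-u, (w : E)⟫ ∧ 0 ≤ ⟪-u, (w : E)⟫}) := by
              refine measure_mono fun w hw => ?_
              simp only [mem_union, mem_ofPred_eq, inner_neg_left] at hw ⊢
              rcases hw with h | h
              · exact Or.inl ⟨h, by linarith⟩
              · exact Or.inr ⟨h, by linarith⟩
          _ ≤ _ := (measure_union_le _ _).trans_eq (by rw [hb' (-u) (by simpa using hu)])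
      calc _ ≤ (b + b) * hh := mul_le_mul_left this _
        _ = (hh + hh) * b := by ring
        _ ≤ _ := mul_le_mul_left huniv2 _
  have key : σ {w : sphere (0:E) 1 | l < ⟪u, (w : E)⟫ ∨ l < -⟪u, (w : E)⟫} ≤
      σ {w : sphere (0:E) 1 | ∃ i, l < ⟪q i, (w : E)⟫} := by
    rcases eq_or_ne hh 0 with h0 | h0
    · rw [h0, add_zero] at huniv
      exact (measure_mono (subset_univ _)).trans (huniv.trans zero_le)
    · exact (ENNReal.mul_le_mul_iff_left h0 (measure_ne_top _ _)).1 (main2.trans main1)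
  have c1 : {w : sphere (0:E) 1 | ∀ i, ⟪q i, (w : E)⟫ ≤ l} =
      {w : sphere (0:E) 1 | ∃ i, l < ⟪q i, (w : E)⟫}ᶜ := by
    ext w; simp
  have c2 : {w : sphere (0:E) 1 | ⟪u, (w : E)⟫ ≤ l ∧ -⟪u, (w : E)⟫ ≤ l} =
      {w : sphere (0:E) 1 | l < ⟪u, (w : E)⟫ ∨ l < -⟪u, (w : E)⟫}ᶜ := by
    ext w; simp
  rw [c1, c2, measure_compl _ (measure_ne_top _ _), measure_compl _ (measure_ne_top _ _)]
  · exact tsub_le_tsub_left key _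
  · exact MeasurableSet.union (s₁ := {w : sphere (0:E) 1 | l < ⟪u, (w : E)⟫})
      (s₂ := {w : sphere (0:E) 1 | l < -⟪u, (w : E)⟫})
      (measurableSet_lt (by fun_prop) (by fun_prop)) (measurableSet_lt (by fun_prop) (by fun_prop))
  · have : {w : sphere (0:E) 1 | ∃ i, l < ⟪q i, (w : E)⟫} =
      ⋃ i, {w : sphere (0:E) 1 | l < ⟪q i, (w : E)⟫} := by ext w; simp
    rw [this]
    exact MeasurableSet.iUnion m2

lemma isClosed_convexHull_of_compact {K : Set E} (hK : IsCompact K) (hne : K.Nonempty) :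
    IsClosed (convexHull ℝ K) := by
  obtain ⟨z0, hz0⟩ := hne
  set m := Module.finrank ℝ E + 1
  let f : (Fin m → ℝ) × (Fin m → E) → E := fun a => ∑ i, a.1 i • a.2 i
  have hf : Continuous f := by fun_prop
  have hc : IsCompact (f '' (stdSimplex ℝ (Fin m) ×ˢ (univ.pi fun _ => K))) :=
    ((isCompact_stdSimplex ℝ (Fin m)).prod (isCompact_univ_pi fun _ => hK)).image hf
  convert hc.isClosed using 1
  apply Subset.antisymm
  · intro x hx
    obtain ⟨ι, _, z, w, hz, hai, hw, hw1, hx⟩ := eq_pos_convex_span_of_mem_convexHull hx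
    have hcard : Fintype.card ι ≤ Fintype.card (Fin m) := by
      rw [Fintype.card_fin]
      exact hai.card_le_finrank_succ.trans (Nat.succ_le_succ (Submodule.finrank_le _))
    obtain ⟨e⟩ := Function.Embedding.nonempty_of_card_le hcard
    have he := e.injective
    refine ⟨(Function.extend e w 0, Function.extend e z fun _ => z0), ⟨⟨?_, ?_⟩, ?_⟩, ?_⟩
    · intro j
      by_cases h : ∃ i, e i = j
      · obtain ⟨i, rfl⟩ := h
        simp only [he.extend_apply]
        exact (hw i).le
      · simp [Function.extend_apply' _ _ _ h]
    · rw [← hw1]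
      symm
      refine Fintype.sum_of_injective e he _ _ ?_ ?_
      · intro j hj
        have h : ¬ ∃ i, e i = j := fun h => hj h
        simp [Function.extend_apply' _ _ _ h]
      · intro i; simp [he.extend_apply]
    · intro j _
      by_cases h : ∃ i, e i = j
      · obtain ⟨i, rfl⟩ := h
        simp only [he.extend_apply]
        exact hz (mem_range_self i)
      · simp only [Function.extend_apply' _ _ _ h]
        exact hz0
    · rw [← hx]
      symm
      refine Fintype.sum_of_injective e he _ _ ?_ ?_
      · intro j hj
        have h : ¬ ∃ i, e i = j := fun h => hj h
        simp [Function.extend_apply' _ _ _ h]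
      · intro i; simp [he.extend_apply]
  · rintro _ ⟨⟨w, z⟩, ⟨hw, hz⟩, rfl⟩
    exact mem_convexHull_iff_exists_fintype.2
      ⟨Fin m, inferInstance, w, z, hw.1, hw.2, fun i => hz i (mem_univ i), rfl⟩

lemma finite_net (Q : Set E) (hQ : ∀ q ∈ Q, ‖q‖ = 1) (hnet : ∀ y : E, ∃ q ∈ Q, 0 ≤ ⟪q, y⟫) :
    ∃ (N : ℕ) (q : Fin N → E), (∀ i, q i ∈ closure Q) ∧ ∀ y, ∃ i, 0 ≤ ⟪q i, y⟫ := by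
  have hb : Bornology.IsBounded Q :=
    (isBounded_closedBall (x := (0:E)) (r := 1)).subset fun q hq => by simp [hQ q hq]
  have hK : IsCompact (closure Q) := hb.isCompact_closure
  obtain ⟨q0, hq0, -⟩ := hnet 0
  have hcl := isClosed_convexHull_of_compact hK ⟨q0, subset_closure hq0⟩
  have h0 : (0 : E) ∈ convexHull ℝ (closure Q) := by
    by_contra h
    obtain ⟨f, c, hf0, hf⟩ := geometric_hahn_banach_point_closed (convex_convexHull ℝ _) hcl h
    obtain ⟨q, hq, hq2⟩ := hnet (-(InnerProductSpace.toDual ℝ E).symm f)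
    have h1 := hf q (subset_convexHull ℝ _ (subset_closure hq))
    rw [inner_neg_right, real_inner_comm, InnerProductSpace.toDual_symm_apply] at hq2
    rw [map_zero] at hf0
    linarith
  obtain ⟨ι, _, w, z, hw, hw1, hz, hs⟩ := mem_convexHull_iff_exists_fintype.1 h0
  have e := Fintype.equivFin ι
  refine ⟨Fintype.card ι, z ∘ e.symm, fun i => hz _, fun y => ?_⟩
  by_contra hcon
  push Not at hcon
  have hneg : ∀ i, ⟪z i, y⟫ < 0 := fun i => by simpa using hcon (e i)
  have hsum : ∑ i, w i * ⟪z i, y⟫ = 0 := by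
    have : ⟪∑ i, w i • z i, y⟫ = 0 := by rw [hs, inner_zero_left]
    rw [sum_inner] at this
    simpa [inner_smul_left] using this
  have hz' := (Finset.sum_eq_zero_iff_of_nonpos
    (fun i _ => mul_nonpos_of_nonneg_of_nonpos (hw i) (hneg i).le)).1 hsum
  have : ∀ i, w i = 0 := fun i => by
    rcases mul_eq_zero.1 (hz' i (Finset.mem_univ i)) with h | h
    · exact h
    · exact absurd h (hneg i).ne
  simp [this] at hw1

lemma finrank_orth (q : E) {k : ℕ} (h : k + 1 ≤ Module.finrank ℝ E) :
    k ≤ Module.finrank ℝ (Submodule.span ℝ {q})ᗮ := by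
  have h1 := Submodule.finrank_add_finrank_orthogonal (Submodule.span ℝ {q})
  have h2 := finrank_span_le_card (R := ℝ) ({q} : Set E)
  simp only [toFinset_singleton, Finset.card_singleton] at h2
  omega

end General

/-- Volume comparison for intersections of disks on the round sphere
(Lemma 3.1, `k = 1` case): if the directions from `p` to `C ⊆ S(p, R)` form a
π/2-net, then for every `r ∈ (0, π]` the measure of `⋂_{c ∈ C} D(c, r)` is at
most that of `D(c₁, r) ∩ D(c₂, r)` for antipodal directions `c₁, c₂` on the
metric sphere of radius `R` about `p`. -/
theorem volume_inter_disks_le (n : ℕ) (hn : 2 ≤ n) (p : USphere n)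
    (R : ℝ) (hR : R ∈ Set.Ioc 0 (Real.pi / 2))
    (C : Set (USphere n))
    (hC : ∀ c ∈ C, ⟪(p : Esp n), (c : Esp n)⟫ = Real.cos R)
    (hnet : ∀ v : Esp n, ‖v‖ = 1 → ⟪v, (p : Esp n)⟫ = 0 →
      ∃ c ∈ C, 0 ≤ ⟪v, (c : Esp n)⟫)
    (r : ℝ) (hr : r ∈ Set.Ioc 0 Real.pi)
    (u : Esp n) (hu : ‖u‖ = 1) (hup : ⟪u, (p : Esp n)⟫ = 0) :
    sphereMeasure n (⋂ c ∈ C, geoDisk (c : Esp n) r) ≤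
      sphereMeasure n
        (geoDisk (Real.cos R • (p : Esp n) + Real.sin R • u) r ∩
          geoDisk (Real.cos R • (p : Esp n) - Real.sin R • u) r) := by
  
  set F := (Submodule.span ℝ {(p : Esp n)})ᗮ with hF
  have hp : ‖(p : Esp n)‖ = 1 := norm_eq_of_mem_sphere p
  have hsin : 0 < Real.sin R := Real.sin_pos_of_pos_of_lt_pi hR.1 (by linarith [hR.2, Real.pi_pos])
  have hfE : Module.finrank ℝ (Esp n) = n + 1 := by simp
  have hfF : 2 ≤ Module.finrank ℝ F := finrank_orth _ (by omega)
  have hnF : Nontrivial F := Module.nontrivial_of_finrank_pos (R := ℝ) (by omega)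
  have hnF' : ∀ q : F, Nontrivial (Submodule.span ℝ {q})ᗮ := fun q =>
    Module.nontrivial_of_finrank_pos (R := ℝ) (finrank_orth (k := 1) q hfF)
  have horth : ∀ y : F, ⟪(p : Esp n), (y : Esp n)⟫ = 0 := fun y =>
    (Submodule.mem_orthogonal_singleton_iff_inner_right (𝕜 := ℝ)).1 y.2
  let Q : Set F := {q | ‖q‖ = 1 ∧ ∃ c ∈ C, (c : Esp n) = Real.cos R • (p : Esp n) - Real.sin R • (q : Esp n)}
  have hnet0 : ∀ y : F, y ≠ 0 → ∃ q ∈ Q, 0 ≤ ⟪q, y⟫ := by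
    intro y hy
    have hy' : 0 < ‖y‖ := norm_pos_iff.2 hy
    obtain ⟨c, hc, hc2⟩ := hnet (-(‖y‖⁻¹ • (y : Esp n)))
      (by rw [norm_neg, norm_smul, norm_inv, norm_norm]; exact inv_mul_cancel₀ hy'.ne')
      (by rw [inner_neg_left, inner_smul_left, real_inner_comm, horth]; simp)
    have hcn : ‖(c : Esp n)‖ = 1 := norm_eq_of_mem_sphere c
    let q' : Esp n := (Real.sin R)⁻¹ • (Real.cos R • (p : Esp n) - c)
    have hq' : q' ∈ F := by
      rw [hF, Submodule.mem_orthogonal_singleton_iff_inner_right]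
      simp only [q']
      rw [inner_smul_right, inner_sub_right, inner_smul_right, hC c hc, real_inner_self_eq_norm_sq, hp]
      simp
    refine ⟨⟨q', hq'⟩, ⟨?_, c, hc, ?_⟩, ?_⟩
    · show ‖q'‖ = 1
      have h1 : ‖Real.cos R • (p : Esp n) - c‖ ^ 2 = Real.sin R ^ 2 := by
        rw [norm_sub_sq_real, norm_smul, hp, hcn, inner_smul_left, hC c hc, Real.norm_eq_abs,
          mul_one, sq_abs, Real.sin_sq]
        simp
        ring
      have h2 : ‖Real.cos R • (p : Esp n) - c‖ = Real.sin R :=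
        (sq_eq_sq₀ (norm_nonneg _) hsin.le).1 h1
      simp only [q']
      rw [norm_smul, h2, norm_inv, Real.norm_of_nonneg hsin.le, inv_mul_cancel₀ hsin.ne']
    · simp only [q']
      rw [smul_smul, mul_inv_cancel₀ hsin.ne', one_smul]
      abel
    · show 0 ≤ ⟪q', (y : Esp n)⟫
      simp only [q']
      rw [inner_neg_left, inner_smul_left, real_inner_comm] at hc2
      rw [inner_smul_left, inner_sub_left, inner_smul_left, horth]
      simp only [conj_trivial, mul_zero, zero_sub] at hc2 ⊢
      have h3 : 0 < ‖y‖⁻¹ := inv_pos.2 hy'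
      have : ⟪(c : Esp n), (y : Esp n)⟫ ≤ 0 := by
        by_contra hcon
        push Not at hcon
        nlinarith [mul_pos h3 hcon]
      exact mul_nonneg (inv_nonneg.2 hsin.le) (by linarith)
  have hnetQ : ∀ y : F, ∃ q ∈ Q, 0 ≤ ⟪q, y⟫ := by
    intro y
    rcases eq_or_ne y 0 with rfl | hy
    · obtain ⟨y', hy'⟩ := exists_ne (0 : F)
      obtain ⟨q, hq, -⟩ := hnet0 y' hy'
      exact ⟨q, hq, by simp⟩
    · exact hnet0 y hy
  obtain ⟨N, q, hqcl, hqnet⟩ := finite_net Q (fun q hq => hq.1) hnetQ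
  have hqn : ∀ i, ‖q i‖ = 1 := fun i =>
    closure_minimal (s := Q) (t := {q | ‖q‖ = 1}) (fun q hq => hq.1)
      (isClosed_eq continuous_norm continuous_const) (hqcl i)
  have huF : u ∈ F := by
    rw [hF, Submodule.mem_orthogonal_singleton_iff_inner_right, real_inner_comm]; exact hup
  -- the two cones
  let c : Fin N → Esp n := fun i => Real.cos R • (p : Esp n) - Real.sin R • (q i : Esp n)
  set c1 := Real.cos R • (p : Esp n) + Real.sin R • u
  set c2 := Real.cos R • (p : Esp n) - Real.sin R • u
  let A : Set (Esp n) := {x | ∀ i, Real.cos r * ‖x‖ ≤ ⟪c i, x⟫}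
  let A' : Set (Esp n) := {x | Real.cos r * ‖x‖ ≤ ⟪c1, x⟫ ∧ Real.cos r * ‖x‖ ≤ ⟪c2, x⟫}
  have mhalf : ∀ v : Esp n, MeasurableSet {x : Esp n | Real.cos r * ‖x‖ ≤ ⟪v, x⟫} :=
    fun v => measurableSet_le (by fun_prop) (by fun_prop)
  have chalf : ∀ (v : Esp n) (t : ℝ), 0 < t → ∀ x : Esp n, Real.cos r * ‖x‖ ≤ ⟪v, x⟫ →
      Real.cos r * ‖t • x‖ ≤ ⟪v, t • x⟫ := by
    intro v t ht x hx
    rw [norm_smul, inner_smul_right, Real.norm_of_nonneg ht.le]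
    nlinarith
  have mA : MeasurableSet A := by
    have : A = ⋂ i, {x : Esp n | Real.cos r * ‖x‖ ≤ ⟪c i, x⟫} := by ext x; simp [A]
    rw [this]
    exact MeasurableSet.iInter fun i => mhalf _
  have mA' : MeasurableSet A' := (mhalf c1).inter (mhalf c2)
  have mBl : MeasurableSet {y : Esp n | y ≠ 0 ∧ ‖y‖ < 1} :=
    (measurableSet_singleton (0:Esp n)).compl.inter
      (measurableSet_lt measurable_norm measurable_const)
  have e1 := toSphere_cone A mA (fun t ht x hx i => chalf _ t ht x (hx i))
  have e2 := toSphere_cone A' mA' (fun t ht x hx => ⟨chalf _ t ht x hx.1, chalf _ t ht x hx.2⟩)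
  have s1 : sphereMeasure n (⋂ c ∈ C, geoDisk (c : Esp n) r) ≤
      (volume : Measure (Esp n)).toSphere {w : sphere (0 : Esp n) 1 | (w : Esp n) ∈ A} := by
    refine measure_mono fun w hw i => ?_
    rw [norm_eq_of_mem_sphere w, mul_one]
    refine closure_minimal (s := Q) (t := {q : F | Real.cos r ≤
      ⟪Real.cos R • (p : Esp n) - Real.sin R • (q : Esp n), (w : Esp n)⟫}) ?_
      (isClosed_le (by fun_prop) (by fun_prop)) (hqcl i)
    rintro q ⟨-, c, hc, hcq⟩
    have := mem_iInter₂.1 hw c hc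
    show Real.cos r ≤ _
    rw [← hcq]
    exact this
  have s2 : (volume : Measure (Esp n)).toSphere {w : sphere (0 : Esp n) 1 | (w : Esp n) ∈ A'} =
      sphereMeasure n (geoDisk c1 r ∩ geoDisk c2 r) := by
    unfold sphereMeasure
    congr 1
    ext w
    simp only [A', geoDisk, mem_inter_iff, mem_ofPred_eq, norm_eq_of_mem_sphere, mul_one]
  refine s1.trans (le_trans ?_ s2.le)
  rw [e1, e2]
  refine mul_le_mul_right ?_ _
  refine vol_le_of_slices (p : Esp n) hp _ _ (mA.inter mBl) (mA'.inter mBl) fun a s hs => ?_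
  by_cases hBl : √(a ^ 2 + s ^ 2) < 1
  swap
  · refine measure_mono ?_
    rintro w ⟨-, -, hw⟩
    rw [norm_slice (p : Esp n) hp] at hw
    exact absurd hw hBl
  set l := (Real.cos R * a - Real.cos r * √(a ^ 2 + s ^ 2)) / (Real.sin R * s) with hl
  have hin : ∀ (v : F) (w : sphere (0 : F) 1) (e : ℝ),
      ⟪Real.cos R • (p : Esp n) + e • (v : Esp n), a • (p : Esp n) + s • ((w : F) : Esp n)⟫ =
        Real.cos R * a + e * s * ⟪v, (w : F)⟫ := by
    intro v w e
    have h1 : ⟪(v : Esp n), (p : Esp n)⟫ = 0 := by rw [real_inner_comm]; exact horth v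
    rw [inner_add_left, inner_smul_left, inner_slice (p : Esp n) hp, inner_smul_left,
      inner_add_right, inner_smul_right, inner_smul_right, h1, Submodule.coe_inner]
    simp only [conj_trivial]
    ring
  have hcond : ∀ x : ℝ, Real.cos r * √(a ^ 2 + s ^ 2) ≤ Real.cos R * a + -Real.sin R * s * x ↔
      x ≤ l := by
    intro x
    rw [hl, le_div_iff₀ (by positivity)]
    constructor <;> intro h <;> linarith
  have key := caps_ineq hnF' q hqn hqnet ⟨u, huF⟩ hu l
  refine (measure_mono ?_).trans (key.trans (measure_mono ?_))
  · rintro w ⟨hw, -⟩ i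
    have h1 := hw i
    simp only [c, sub_eq_add_neg, ← neg_smul] at h1
    rw [norm_slice (p : Esp n) hp, hin] at h1
    exact (hcond _).1 h1
  · rintro w ⟨h1, h2⟩
    refine ⟨⟨?_, ?_⟩, ?_, ?_⟩
    · rw [norm_slice (p : Esp n) hp, hin ⟨u, huF⟩ w]
      have := (hcond _).2 h2
      linarith
    · simp only [c2, sub_eq_add_neg, ← neg_smul]
      rw [norm_slice (p : Esp n) hp, hin ⟨u, huF⟩ w]
      exact (hcond _).2 h1
    · intro h0
      have h := norm_slice (p : Esp n) hp a s w
      rw [h0, norm_zero] at h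
      have : 0 < √(a ^ 2 + s ^ 2) := by positivity
      linarith
    · show ‖_‖ < 1
      rw [norm_slice (p : Esp n) hp]
      exact hBl
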